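/- Let q be a prime power, n ≥ 2, and let V = F_{q^2}^n be endowed with a nondegenerate Hermitian form, with isometry group GU(V) ≅ GU_n(q). Set N = (q^n − (−1)^n)(q^{n−1} − (−1)^{n−1}). If T_1, T_2 are two independent uniformly random unitary transvections in GU(V), then the probability that the fixed point subspace ker(T_1T_2 − I) has codimension e in V equals: (q^{2n−1} − (−1)^{n−1}q^n − (−1)^n q^{n−1} − q²)/N if e = 2; (q² − q − 2)/N if e = 1; and (q+1)/N if e = 0. -/

import Mathlib

noncomputable section

/-- The subgroup of `GL_m(E)` consisting of the invertible matrices preserving the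
form `B` on `E^m`. -/
def formIsometry {E : Type} [Field E] {m : ℕ} (B : (Fin m → E) → (Fin m → E) → E) :
    Subgroup (Matrix (Fin m) (Fin m) E)ˣ where
  carrier := {g | ∀ x y, B ((g : Matrix (Fin m) (Fin m) E).mulVec x)
    ((g : Matrix (Fin m) (Fin m) E).mulVec y) = B x y}
  one_mem' := by
    intro x y
    simp [Matrix.one_mulVec]
  mul_mem' := by
    intro a b ha hb x y
    simp only [Units.val_mul, ← Matrix.mulVec_mulVec]
    rw [ha, hb]
  inv_mem' := by
    intro g hg x y
    have := hg ((g⁻¹ : (Matrix (Fin m) (Fin m) E)ˣ).val.mulVec x)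
      ((g⁻¹ : (Matrix (Fin m) (Fin m) E)ˣ).val.mulVec y)
    rw [Matrix.mulVec_mulVec, Matrix.mulVec_mulVec, ← Units.val_mul, mul_inv_cancel,
      Units.val_one, Matrix.one_mulVec, Matrix.one_mulVec] at this
    exact this.symm

instance {E : Type} [Field E] [Fintype E] {m : ℕ}
    (B : (Fin m → E) → (Fin m → E) → E) : Fintype ↥(formIsometry B) :=
  Fintype.ofFinite _

/-- The dimension of the fixed space `ker(g−1)` of `g ∈ GL_m(E)` acting on `E^m`. -/
def fixdim {E : Type} [Field E] {m : ℕ} (g : (Matrix (Fin m) (Fin m) E)ˣ) : ℕ :=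
  Module.finrank E (LinearMap.ker (Matrix.toLin' ((g : Matrix (Fin m) (Fin m) E) - 1)))

/-- `T` is a transvection of `GL(E^m)`: `T = I + v w*` with `v ∈ V`, `w* ∈ V*` nonzero
and `w*(v) = 0`, i.e. `T : y ↦ y + w*(y)·v`. -/
def IsGLTransvection {E : Type} [Field E] {m : ℕ} (T : Matrix (Fin m) (Fin m) E) : Prop :=
  ∃ v : Fin m → E, v ≠ 0 ∧ ∃ w : (Fin m → E) →ₗ[E] E, w ≠ 0 ∧ w v = 0 ∧
    ∀ y, T.mulVec y = y + w y • v

/-!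
Let `f n` be the number of isotropic vectors, zero included, of a nondegenerate Hermitian space of
dimension `n`. Splitting off the line of an anisotropic vector `v` writes every vector as
`k + a • v` with `k ⊥ v` and `(k + a • v|k + a • v) = (k|k) + a ^ (q + 1) * (v|v)`. As the norm
`a ↦ a ^ (q + 1)` takes every nonzero value of the fixed field of `σ` exactly `q + 1` times, this
gives a linear recurrence for `f`, and hence `f n - 1 = N`.

A nonzero isotropic `v` is the centre of `q - 1` unitary transvections, one for each nonzero `c`
with `c + σ c = 0`, and every unitary transvection arises from the `q ^ 2 - 1` nonzero multiples of
`v`, so there are `N / (q + 1)` of them. For a fixed `T` with centre `v` the product `T * S` is the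
identity only for `S = T⁻¹`, it is again a transvection for the `q - 2` other `S` with centre `v`,
and for every remaining `S` the two fixed hyperplanes are distinct and the product fixes exactly
their intersection.
-/

theorem sq_neg_one_pow_eq_one {R : Type*} [Ring R] (n : ℕ) : ((-1 : R) ^ n) ^ 2 = 1 := by
  rw [pow_right_comm, neg_one_sq, one_pow]

theorem ncard_setOf_mem_and_mem_fiber {α β : Type*} [Finite α] [Finite β] (s : Set α)
    (r : α → Set β) {m : ℕ} (hr : ∀ a ∈ s, (r a).ncard = m) :
    {p : α × β | p.1 ∈ s ∧ p.2 ∈ r p.1}.ncard = s.ncard * m := by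
  have := Fintype.ofFinite s
  let e : {p : α × β | p.1 ∈ s ∧ p.2 ∈ r p.1} ≃ Σ a : s, r a :=
    { toFun := fun p => ⟨⟨p.1.1, p.2.1⟩, ⟨p.1.2, p.2.2⟩⟩
      invFun := fun x => ⟨(x.1, x.2), x.1.2, x.2.2⟩ }
  rw [← Nat.card_coe_set_eq, Nat.card_congr e, Nat.card_sigma,
    Finset.sum_congr rfl fun a _ => (Nat.card_coe_set_eq _).trans (hr a.1 a.2)]
  simp

theorem ncard_mul_eq_ncard_mul {α β : Type*} [Finite α] [Finite β] (r : α → β → Prop)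
    {s : Set α} {t : Set β} {m n : ℕ} (hs : ∀ a ∈ s, {b ∈ t | r a b}.ncard = m)
    (ht : ∀ b ∈ t, {a ∈ s | r a b}.ncard = n) : s.ncard * m = t.ncard * n := by
  rw [← ncard_setOf_mem_and_mem_fiber s _ hs, ← ncard_setOf_mem_and_mem_fiber t _ ht]
  refine Set.ncard_congr (fun p _ => p.swap) ?_ ?_ ?_
  · rintro ⟨a, b⟩ ⟨ha, hb, hab⟩
    exact ⟨hb, ha, hab⟩
  · rintro p p' - - h
    exact Prod.swap_injective h
  · rintro ⟨b, a⟩ ⟨hb, ha, hab⟩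
    exact ⟨(a, b), ⟨ha, hb, hab⟩, rfl⟩

theorem ncard_setOf_pow_eq_of_pow_eq_one {G : Type*} [CommGroup G] [IsCyclic G] [Finite G] {d m : ℕ}
    (hG : Nat.card G = d * m) {y : G} (hy : y ^ m = 1) : {x : G | x ^ d = y}.ncard = d := by
  have hrange : (powMonoidHom d : G →* G).range = (powMonoidHom m : G →* G).ker := by
    refine Subgroup.eq_of_le_of_card_ge ?_ ?_
    · rintro _ ⟨x, rfl⟩
      rw [MonoidHom.mem_ker, powMonoidHom_apply, powMonoidHom_apply, ← pow_mul, ← hG,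
        pow_card_eq_one']
    · rw [IsCyclic.card_powMonoidHom_ker, IsCyclic.card_powMonoidHom_range, hG,
        Nat.gcd_mul_left_left, Nat.gcd_mul_right_left]
      exact (Nat.mul_div_cancel_left m (Nat.pos_of_mul_pos_right (hG ▸ Nat.card_pos))).ge
  obtain ⟨x, rfl⟩ : y ∈ (powMonoidHom d : G →* G).range :=
    hrange ▸ (show powMonoidHom m y = 1 from hy)
  rw [← Nat.card_coe_set_eq]
  refine (Nat.card_congr ((powMonoidHom d).fiberEquivKer x)).trans ?_
  rw [IsCyclic.card_powMonoidHom_ker, hG, Nat.gcd_mul_right_left]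

section FiniteField

variable {E : Type*} [Field E] [Fintype E] {q : ℕ}

theorem ncard_setOf_pow_eq {d m : ℕ} (hd : d ≠ 0) (hE : Fintype.card E = d * m + 1) {y : E}
    (hy : y ^ m = 1) : {x : E | x ^ d = y}.ncard = d := by
  have hm : m ≠ 0 := by
    rintro rfl
    exact Fintype.one_lt_card.ne' hE
  have hy0 : y ≠ 0 := ne_zero_pow hm (hy ▸ one_ne_zero)
  have hunits : Nat.card Eˣ = d * m := by simp [Nat.card_units, hE]
  have himage : {x : E | x ^ d = y} = Units.val '' {u : Eˣ | u ^ d = Units.mk0 y hy0} := by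
    ext x
    constructor
    · rintro rfl
      exact ⟨Units.mk0 x (ne_zero_pow hd hy0), by ext; simp, rfl⟩
    · rintro ⟨u, hu, rfl⟩
      simpa using congr_arg Units.val hu
  rw [himage, Set.ncard_image_of_injective _ Units.val_injective,
    ncard_setOf_pow_eq_of_pow_eq_one hunits (by ext; simpa using hy)]

theorem two_le_of_card_eq_sq (hq : Fintype.card E = q ^ 2) : 2 ≤ q :=
  lt_of_pow_lt_pow_left₀ 2 (Nat.zero_le q) (by rw [one_pow, ← hq]; exact Fintype.one_lt_card)

theorem card_eq_succ_mul_pred_add_one (hq : Fintype.card E = q ^ 2) :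
    Fintype.card E = (q + 1) * (q - 1) + 1 := by
  obtain ⟨r, rfl⟩ := Nat.exists_eq_add_of_le' (two_le_of_card_eq_sq hq)
  rw [hq, show r + 2 - 1 = r + 1 by omega]
  ring

theorem exists_ringHom_eq_pow (hq : Fintype.card E = q ^ 2) :
    ∃ σ : E →+* E, ∀ a, σ a = a ^ q := by
  obtain ⟨p, _, k, hp, hk⟩ := FiniteField.card' E
  have := Fact.mk hp
  obtain ⟨j, -, rfl⟩ := (Nat.dvd_prime_pow hp).1 (hk ▸ hq ▸ dvd_pow_self q two_ne_zero)
  exact ⟨iterateFrobenius E p j, iterateFrobenius_def p j⟩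

variable {σ : E →+* E}

theorem pow_pred_eq_iff_map_eq_mul (hq : Fintype.card E = q ^ 2) (hσ : ∀ a, σ a = a ^ q) {a : E}
    (ha : a ≠ 0) (b : E) : a ^ (q - 1) = b ↔ σ a = b * a := by
  rw [hσ, ← Nat.sub_add_cancel (one_le_two.trans (two_le_of_card_eq_sq hq)), pow_succ,
    Nat.add_sub_cancel, mul_left_inj' ha]

theorem ncard_setOf_mul_map_eq (hq : Fintype.card E = q ^ 2) (hσ : ∀ a, σ a = a ^ q) {t : E}
    (ht : t ≠ 0) (hσt : σ t = t) : {a | a * σ a = t}.ncard = q + 1 := by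
  simp_rw [hσ, ← pow_succ']
  exact ncard_setOf_pow_eq (Nat.succ_ne_zero q) (card_eq_succ_mul_pred_add_one hq)
    ((pow_pred_eq_iff_map_eq_mul hq hσ ht 1).2 (by rw [hσt, one_mul]))

/-- The nonzero scalars `c` with `c + σ c = 0`: those for which the map `x ↦ x + c (v|x) v`
attached to a nonzero isotropic vector `v` is a unitary transvection. -/
def traceZeroScalars (σ : E →+* E) : Set E :=
  {c | c ≠ 0 ∧ c + σ c = 0}

theorem ncard_traceZeroScalars (hq : Fintype.card E = q ^ 2) (hσ : ∀ a, σ a = a ^ q) :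
    (traceZeroScalars σ).ncard = q - 1 := by
  have hq2 := two_le_of_card_eq_sq hq
  rw [← ncard_setOf_pow_eq (E := E) (y := -1) (Nat.sub_ne_zero_of_lt hq2)
    (mul_comm (q + 1) (q - 1) ▸ card_eq_succ_mul_pred_add_one hq)
    (by rw [pow_succ, ← hσ, map_neg, map_one]; ring)]
  congr 1 with c
  by_cases hc : c = 0
  · simp [traceZeroScalars, hc, Nat.sub_ne_zero_of_lt hq2]
  · rw [Set.mem_ofPred_eq, pow_pred_eq_iff_map_eq_mul hq hσ hc, neg_one_mul,
      ← add_eq_zero_iff_eq_neg, add_comm]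
    simp [traceZeroScalars, hc]

theorem exists_add_map_ne_zero (hq : Fintype.card E = q ^ 2) (hσ : ∀ a, σ a = a ^ q) :
    ∃ a, a + σ a ≠ 0 := by
  by_contra! h
  have hall : traceZeroScalars σ = {0}ᶜ := by ext c; simp [traceZeroScalars, h]
  have hcard := ncard_traceZeroScalars hq hσ
  rw [hall, Set.ncard_compl, Set.ncard_singleton, Nat.card_eq_fintype_card, hq] at hcard
  have hq2 := two_le_of_card_eq_sq hq
  have hlt : q < q ^ 2 := lt_self_pow₀ hq2 one_lt_two
  omega

end FiniteField

section FixedSpace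

open Module

variable {E V : Type*} [Field E] [AddCommGroup V] [Module E V]

theorem finrank_quotient_ker_dual {f : Dual E V} (hf : f ≠ 0) :
    finrank E (V ⧸ LinearMap.ker f) = 1 :=
  (f.quotKerEquivOfSurjective (LinearMap.surjective hf)).finrank_eq.trans (finrank_self E)

theorem finrank_quotient_ker_inf_ker_dual {f g : Dual E V} (hf : f ≠ 0) (hg : g ≠ 0)
    (hfg : LinearMap.ker f ≠ LinearMap.ker g) :
    finrank E (V ⧸ (LinearMap.ker f ⊓ LinearMap.ker g)) = 2 := by
  have hf' := LinearMap.surjective hf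
  have hg' := LinearMap.surjective hg
  have hsup : LinearMap.ker f ⊔ LinearMap.ker g = ⊤ :=
    ((LinearMap.isCoatom_ker_of_surjective hf').codisjoint_of_ne
      (LinearMap.isCoatom_ker_of_surjective hg') hfg).eq_top
  have hsurj : Function.Surjective (f.prod g) := by
    rw [← LinearMap.range_eq_top, LinearMap.range_prod_eq hsup, LinearMap.range_eq_top.2 hf',
      LinearMap.range_eq_top.2 hg', Submodule.prod_top]
  rw [← LinearMap.ker_prod, ((f.prod g).quotKerEquivOfSurjective hsurj).finrank_eq, finrank_prod,
    finrank_self]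

theorem bijective_ker_add_smul {f : Dual E V} {v : V} (hv : f v ≠ 0) :
    Function.Bijective fun p : LinearMap.ker f × E => (p.1 : V) + p.2 • v := by
  constructor
  · rintro ⟨k, a⟩ ⟨k', a'⟩ h
    have ha : a = a' := by simpa [hv] using congr_arg f h
    subst ha
    simpa using h
  · intro x
    obtain ⟨_, hav, k, hk, rfl⟩ := Submodule.mem_sup.1
      ((LinearMap.span_singleton_sup_ker_eq_top f hv).ge (Submodule.mem_top (x := x)))
    obtain ⟨a, rfl⟩ := Submodule.mem_span_singleton.1 hav
    exact ⟨(⟨k, hk⟩, a), add_comm k (a • v)⟩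

theorem fixedSubmodule_transvection {f : Dual E V} {v : V} (hfv : f v = 0) (hv : v ≠ 0) :
    (LinearEquiv.transvection hfv).fixedSubmodule = LinearMap.ker f := by
  ext x
  rw [LinearEquiv.mem_fixedSubmodule_transvection_iff, smul_eq_zero_iff_left hv, LinearMap.mem_ker]

theorem fixedSubmodule_transvection_mul {f g : Dual E V} {v w : V} (hfv : f v = 0) (hgw : g w = 0)
    (hvw : LinearIndependent E ![v, w]) :
    (LinearEquiv.transvection hfv * LinearEquiv.transvection hgw).fixedSubmodule =
      LinearMap.ker f ⊓ LinearMap.ker g := by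
  ext x
  have happly : (LinearEquiv.transvection hfv * LinearEquiv.transvection hgw) x =
      x + (f (x + g x • w) • v + g x • w) := by
    simp only [LinearEquiv.mul_apply, LinearEquiv.transvection.apply]
    abel
  rw [LinearMap.mem_fixedSubmodule_iff, LinearEquiv.coe_coe, happly, add_eq_left,
    Submodule.mem_inf, LinearMap.mem_ker, LinearMap.mem_ker]
  constructor
  · intro h
    obtain ⟨hf, hg⟩ := LinearIndependent.pair_iff.1 hvw _ _ h
    rw [hg, zero_smul, add_zero] at hf
    exact ⟨hf, hg⟩
  · rintro ⟨hf, hg⟩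
    simp [hf, hg]

/-- The codimension of the space of fixed points `ker (T - 1)` of `T`. -/
def fixedCodim (T : V ≃ₗ[E] V) : ℕ :=
  finrank E (V ⧸ T.fixedSubmodule)

theorem fixedCodim_eq_zero_iff [Module.Finite E V] {T : V ≃ₗ[E] V} : fixedCodim T = 0 ↔ T = 1 := by
  rw [fixedCodim, finrank_zero_iff, Submodule.Quotient.subsingleton_iff,
    LinearEquiv.fixedSubmodule_eq_top_iff, LinearEquiv.one_eq_refl]

end FixedSpace

section Hermitian

variable {E V : Type*} [Field E] [AddCommGroup V] [Module E V] {σ : E →+* E}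
  {B : V →ₛₗ[σ] V →ₗ[E] E}

theorem apply_ne_zero_of_separatingLeft (hsep : B.SeparatingLeft) {v : V} (hv : v ≠ 0) : B v ≠ 0 :=
  mt (LinearMap.separatingLeft_iff_linear_nontrivial.1 hsep v) hv

theorem exists_apply_eq_one_of_separatingLeft (hsep : B.SeparatingLeft) {v : V} (hv : v ≠ 0) :
    ∃ y, B v y = 1 :=
  LinearMap.surjective (apply_ne_zero_of_separatingLeft hsep hv) 1

theorem exists_eq_smul_of_ker_eq (hsymm : B.IsSymm) (hsep : B.SeparatingLeft) {v w : V}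
    (hv : v ≠ 0) (hvw : LinearMap.ker (B v) = LinearMap.ker (B w)) : ∃ a : E, w = a • v := by
  obtain ⟨x, hx⟩ := exists_apply_eq_one_of_separatingLeft hsep hv
  have hmul (y : V) : B w y = B v y * B w x := by
    have hy : y - B v y • x ∈ LinearMap.ker (B w) := by simp [← hvw, hx]
    simpa [sub_eq_zero] using hy
  refine ⟨B x w, sub_eq_zero.1 (hsep _ fun y => hsymm.isRefl.eq_zero ?_)⟩
  rw [map_sub, map_smul, ← hsymm.eq w y, hmul, map_mul, hsymm.eq, hsymm.eq, smul_eq_mul, mul_comm,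
    sub_self]

theorem separatingLeft_domRestrict_ker (hsymm : B.IsSymm) (hsep : B.SeparatingLeft) {v : V}
    (hv : B v v ≠ 0) :
    (B.domRestrict₁₂ (LinearMap.ker (B v)) (LinearMap.ker (B v))).SeparatingLeft := by
  rintro ⟨k, hk⟩ hkK
  refine Subtype.ext (hsep k fun y => ?_)
  obtain ⟨⟨k', a⟩, rfl⟩ := (bijective_ker_add_smul hv).surjective y
  have hkk' : B k k' = 0 := hkK k'
  have hkv : B k v = 0 := hsymm.isRefl.eq_zero hk
  simp [hkk', hkv]

theorem apply_add_smul_self (hsymm : B.IsSymm) {v k : V} (hk : B v k = 0) (a : E) :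
    B (k + a • v) (k + a • v) = B k k + a * σ a * B v v := by
  have hkv : B k v = 0 := hsymm.isRefl.eq_zero hk
  simp only [map_add, LinearMap.add_apply, LinearMap.map_smulₛₗ, LinearMap.smul_apply,
    RingHom.id_apply, smul_eq_mul, hk, hkv]
  ring

theorem exists_apply_self_ne_zero [Nontrivial V] (hσ : ∃ a, a + σ a ≠ 0) (hsymm : B.IsSymm)
    (hsep : B.SeparatingLeft) : ∃ v, B v v ≠ 0 := by
  by_contra! h
  obtain ⟨a, ha⟩ := hσ
  obtain ⟨v, hv⟩ := exists_ne (0 : V)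
  obtain ⟨y, hy⟩ := exists_apply_eq_one_of_separatingLeft hsep hv
  have hyv : B y v = 1 := by rw [← hsymm.eq, hy, map_one]
  have hsum := h (v + a • y)
  simp only [map_add, LinearMap.add_apply, LinearMap.map_smulₛₗ, LinearMap.smul_apply,
    RingHom.id_apply, smul_eq_mul, h, hy, hyv] at hsum
  exact ha (by linear_combination hsum)

/-- The nonzero isotropic vectors of `B`, the centres of the unitary transvections. -/
def isotropicVectors (B : V →ₛₗ[σ] V →ₗ[E] E) : Set V :=
  {v | v ≠ 0 ∧ B v v = 0}

theorem mem_isotropicVectors_and_mem_span_iff {v w : V} (hv : v ∈ isotropicVectors B) :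
    w ∈ isotropicVectors B ∧ v ∈ E ∙ w ↔ ∃ a : E, a ≠ 0 ∧ a • v = w := by
  constructor
  · rintro ⟨-, hvw⟩
    obtain ⟨a, rfl⟩ := Submodule.mem_span_singleton.1 hvw
    have ha : a ≠ 0 := left_ne_zero_of_smul hv.1
    exact ⟨a⁻¹, inv_ne_zero ha, inv_smul_smul₀ ha w⟩
  · rintro ⟨a, ha, rfl⟩
    exact ⟨⟨smul_ne_zero ha hv.1, by simp [hv.2]⟩,
      Submodule.mem_span_singleton.2 ⟨a⁻¹, inv_smul_smul₀ ha v⟩⟩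

end Hermitian

section Isotropic

variable {E V : Type*} [Field E] [Fintype E] [AddCommGroup V] [Module E V] [Module.Finite E V]
  {q : ℕ} {σ : E →+* E} {B : V →ₛₗ[σ] V →ₗ[E] E}

theorem ncard_setOf_add_mul_map_mul_eq_zero (hq : Fintype.card E = q ^ 2) (hσ : ∀ a, σ a = a ^ q)
    {b c : E} (hb : b ≠ 0) (hσb : σ b = b) (hc : c ≠ 0) (hσc : σ c = c) :
    {a | b + a * σ a * c = 0}.ncard = q + 1 := by
  rw [← ncard_setOf_mul_map_eq hq hσ (div_ne_zero (neg_ne_zero.2 hb) hc)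
    (by rw [map_div₀, map_neg, hσb, hσc])]
  simp only [eq_div_iff hc, eq_neg_iff_add_eq_zero, add_comm]

theorem ncard_setOf_apply_self_eq_zero_add_mul (hq : Fintype.card E = q ^ 2) (hσ : ∀ a, σ a = a ^ q)
    (hsymm : B.IsSymm) {v : V} (hv : B v v ≠ 0) :
    {x | B x x = 0}.ncard + q * {k : LinearMap.ker (B v) | B k k = 0}.ncard =
      (q + 1) * Nat.card (LinearMap.ker (B v)) := by
  have : Finite V := Module.finite_of_finite E
  set Z := {k : LinearMap.ker (B v) | B k k = 0}
  let r (k : LinearMap.ker (B v)) : Set E := {a | B k k + a * σ a * B v v = 0}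
  have hsplit : {x | B x x = 0}.ncard =
      {p : LinearMap.ker (B v) × E | p.1 ∈ Z ∧ p.2 ∈ r p.1}.ncard +
        {p : LinearMap.ker (B v) × E | p.1 ∈ Zᶜ ∧ p.2 ∈ r p.1}.ncard := by
    rw [← Set.ncard_union_eq (Set.disjoint_left.2 fun p h h' => h'.1 h.1),
      ← Set.ncard_preimage_of_injective_subset_range (bijective_ker_add_smul hv).injective
        (by simp [(bijective_ker_add_smul hv).surjective.range_eq])]
    congr 1 with p
    rw [Set.mem_preimage, Set.mem_ofPred_eq, apply_add_smul_self hsymm p.1.2]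
    by_cases hp : p.1 ∈ Z <;> simp [hp, r]
  rw [hsplit, ncard_setOf_mem_and_mem_fiber Z r (m := 1),
    ncard_setOf_mem_and_mem_fiber Zᶜ r (m := q + 1), ← Set.ncard_add_ncard_compl Z]
  · ring
  · exact fun k hk => ncard_setOf_add_mul_map_mul_eq_zero hq hσ hk (hsymm.eq k k) hv (hsymm.eq v v)
  · intro k (hk : B k k = 0)
    simp [r, hk, hv]

theorem mul_ncard_setOf_apply_self_eq_zero (hq : Fintype.card E = q ^ 2) (hσ : ∀ a, σ a = a ^ q)
    (hsymm : B.IsSymm) (hsep : B.SeparatingLeft) {n : ℕ} (hn : Module.finrank E V = n) :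
    (q : ℝ) * {x | B x x = 0}.ncard = q ^ (2 * n) + (-1) ^ n * (q ^ (n + 1) - q ^ n) := by
  induction n generalizing V with
  | zero =>
    have := Module.finrank_zero_iff.1 hn
    have huniv : {x | B x x = 0} = {0} := by
      ext x
      simp [Subsingleton.elim x 0]
    simp [huniv]
  | succ n ih =>
    have := Module.nontrivial_of_finrank_pos (n.succ_pos.trans_eq hn.symm)
    obtain ⟨v, hv⟩ := exists_apply_self_ne_zero (exists_add_map_ne_zero hq hσ) hsymm hsep
    have hBv : B v ≠ 0 := fun h => hv (by rw [h, LinearMap.zero_apply])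
    have hK : Module.finrank E (LinearMap.ker (B v)) = n := by
      have := Module.Dual.finrank_ker_add_one_of_ne_zero hBv
      omega
    have hcard : Nat.card (LinearMap.ker (B v)) = q ^ (2 * n) := by
      rw [Module.natCard_eq_pow_finrank (K := E), hK, Nat.card_eq_fintype_card, hq, pow_mul]
    have hrec := ncard_setOf_apply_self_eq_zero_add_mul hq hσ hsymm hv
    have hker := ih (hsymm.domRestrict _) (separatingLeft_domRestrict_ker hsymm hsep hv) hK
    simp only [LinearMap.domRestrict₁₂_apply] at hker
    rw [hcard] at hrec
    have hrec' := congr_arg (Nat.cast : ℕ → ℝ) hrec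
    push_cast at hrec'
    linear_combination (q : ℝ) * hrec' - (q : ℝ) * hker

theorem ncard_isotropicVectors (hq : Fintype.card E = q ^ 2) (hσ : ∀ a, σ a = a ^ q)
    (hsymm : B.IsSymm) (hsep : B.SeparatingLeft) {n : ℕ} (hn : Module.finrank E V = n + 1) :
    ((isotropicVectors B).ncard : ℝ) =
      (q ^ (n + 1) - (-1) ^ (n + 1)) * (q ^ n - (-1) ^ n) := by
  have : Finite V := Module.finite_of_finite E
  have hq0 : (q : ℝ) ≠ 0 := by
    have := two_le_of_card_eq_sq hq
    positivity
  have hinsert : insert 0 (isotropicVectors B) = {x | B x x = 0} := by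
    ext x
    by_cases hx : x = 0 <;> simp [isotropicVectors, hx]
  have hcard := mul_ncard_setOf_apply_self_eq_zero hq hσ hsymm hsep hn
  rw [← hinsert, Set.ncard_insert_of_notMem (by simp [isotropicVectors])] at hcard
  push_cast at hcard
  refine mul_left_cancel₀ hq0 ?_
  linear_combination hcard + q * sq_neg_one_pow_eq_one (R := ℝ) n

end Isotropic

section UnitaryTransvection

variable {E V : Type*} [Field E] [AddCommGroup V] [Module E V] {σ : E →+* E}
  {B : V →ₛₗ[σ] V →ₗ[E] E}

/-- The unitary transvections: the nontrivial transvections preserving `B`. The identity has to be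
excluded by hand, as it belongs to `LinearEquiv.transvections`. -/
def unitaryTransvections (B : V →ₛₗ[σ] V →ₗ[E] E) : Set (V ≃ₗ[E] V) :=
  {T | T ∈ LinearEquiv.transvections E V ∧ T ≠ 1 ∧ ∀ x y, B (T x) (T y) = B x y}

/-- The unitary transvections whose centre, the line `range (T - 1)`, is spanned by `v`. -/
def unitaryTransvectionsAlong (B : V →ₛₗ[σ] V →ₗ[E] E) (v : V) : Set (V ≃ₗ[E] V) :=
  {T ∈ unitaryTransvections B | ∀ x, T x - x ∈ E ∙ v}

/-- The transvection `x ↦ x + c (v|x) v` with isotropic centre `v`. -/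
def unitaryTransvection {v : V} (hv : B v v = 0) (c : E) : V ≃ₗ[E] V :=
  LinearEquiv.transvection (f := c • B v) (v := v) (by simp [hv])

theorem unitaryTransvection_apply {v : V} (hv : B v v = 0) (c : E) (x : V) :
    unitaryTransvection hv c x = x + (c * B v x) • v :=
  rfl

theorem unitaryTransvection_zero {v : V} (hv : B v v = 0) : unitaryTransvection hv 0 = 1 := by
  ext x
  simp [unitaryTransvection_apply]

theorem unitaryTransvection_mul {v : V} (hv : B v v = 0) (c d : E) :
    unitaryTransvection hv c * unitaryTransvection hv d = unitaryTransvection hv (c + d) := by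
  ext x
  simp only [LinearEquiv.mul_apply, unitaryTransvection_apply, map_add, map_smul, hv, mul_zero]
  module

theorem unitaryTransvection_injective (hsep : B.SeparatingLeft) {v : V} (hv : B v v = 0)
    (hv0 : v ≠ 0) : Function.Injective (unitaryTransvection hv) := by
  intro c d hcd
  obtain ⟨y, hy⟩ := exists_apply_eq_one_of_separatingLeft hsep hv0
  have hy' := LinearEquiv.congr_fun hcd y
  simpa [unitaryTransvection_apply, hy, hv0] using hy'

theorem unitaryTransvection_preserves_iff (hsymm : B.IsSymm) (hsep : B.SeparatingLeft) {v : V}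
    (hv : B v v = 0) (hv0 : v ≠ 0) {c : E} :
    (∀ x y, B (unitaryTransvection hv c x) (unitaryTransvection hv c y) = B x y) ↔
      c + σ c = 0 := by
  have hexpand (x y : V) : B (unitaryTransvection hv c x) (unitaryTransvection hv c y) =
      B x y + (c + σ c) * (B x v * B v y) := by
    simp only [unitaryTransvection_apply, map_add, LinearMap.add_apply, LinearMap.map_smulₛₗ,
      LinearMap.smul_apply, RingHom.id_apply, smul_eq_mul, map_mul, hsymm.eq, hv]
    ring
  simp only [hexpand, add_eq_left]
  refine ⟨fun h => ?_, fun h x y => by rw [h, zero_mul]⟩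
  obtain ⟨y, hy⟩ := exists_apply_eq_one_of_separatingLeft hsep hv0
  simpa [← hsymm.eq v y, hy] using h y y

theorem unitaryTransvection_mem_iff (hsymm : B.IsSymm) (hsep : B.SeparatingLeft) {v : V}
    (hv : B v v = 0) (hv0 : v ≠ 0) {c : E} :
    unitaryTransvection hv c ∈ unitaryTransvections B ↔ c ∈ traceZeroScalars σ := by
  rw [unitaryTransvections, Set.mem_ofPred_eq, unitaryTransvection_preserves_iff hsymm hsep hv hv0,
    ← unitaryTransvection_zero hv, (unitaryTransvection_injective hsep hv hv0).ne_iff]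
  exact and_iff_right (LinearEquiv.mem_transvections _)

theorem exists_eq_smul_of_preserves (hsymm : B.IsSymm) (hsep : B.SeparatingLeft)
    {f : Module.Dual E V} (hf : f ≠ 0) {v : V} (hv0 : v ≠ 0) (hfv : f v = 0)
    (hB : ∀ x y, B (x + f x • v) (y + f y • v) = B x y) :
    B v v = 0 ∧ ∃ c : E, f = c • B v := by
  have hexpand (x y : V) : f y * B x v + σ (f x) * B v y + σ (f x) * f y * B v v = 0 := by
    have := hB x y
    simp only [map_add, LinearMap.add_apply, LinearMap.map_smulₛₗ, LinearMap.smul_apply,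
      RingHom.id_apply, smul_eq_mul] at this
    linear_combination this
  have hv : B v v = 0 := by
    obtain ⟨y, hy⟩ := LinearMap.surjective hf 1
    simpa [hfv, hy] using hexpand v y
  obtain ⟨x, hx⟩ := exists_apply_eq_one_of_separatingLeft hsep hv0
  have hxv : B x v = 1 := by rw [← hsymm.eq, hx, map_one]
  refine ⟨hv, -σ (f x), LinearMap.ext fun y => ?_⟩
  have := hexpand x y
  rw [hv, hxv] at this
  rw [LinearMap.smul_apply, smul_eq_mul]
  linear_combination this

theorem exists_eq_unitaryTransvection (hsymm : B.IsSymm) (hsep : B.SeparatingLeft)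
    {T : V ≃ₗ[E] V} (hT : T ∈ unitaryTransvections B) :
    ∃ v, ∃ hv : B v v = 0, v ≠ 0 ∧ ∃ c ∈ traceZeroScalars σ, T = unitaryTransvection hv c := by
  obtain ⟨⟨f, v, hfv, rfl⟩, hne, hB⟩ := id hT
  have hf : f ≠ 0 := by
    rintro rfl
    exact hne (LinearEquiv.transvection.of_left_eq_zero v hfv)
  have hv0 : v ≠ 0 := by
    rintro rfl
    exact hne (LinearEquiv.transvection.of_right_eq_zero f hfv)
  obtain ⟨hv, c, rfl⟩ := exists_eq_smul_of_preserves hsymm hsep hf hv0 hfv hB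
  exact ⟨v, hv, hv0, c, (unitaryTransvection_mem_iff hsymm hsep hv hv0).1 hT, rfl⟩

theorem forall_unitaryTransvection_sub_mem_span_iff (hsep : B.SeparatingLeft) {v w : V}
    (hv : B v v = 0) (hv0 : v ≠ 0) {c : E} (hc : c ≠ 0) :
    (∀ x, unitaryTransvection hv c x - x ∈ E ∙ w) ↔ v ∈ E ∙ w := by
  simp only [unitaryTransvection_apply, add_sub_cancel_left]
  refine ⟨fun h => ?_, fun h x => Submodule.smul_mem _ _ h⟩
  obtain ⟨y, hy⟩ := exists_apply_eq_one_of_separatingLeft hsep hv0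
  exact (Submodule.smul_mem_iff _ hc).1 (by simpa [hy] using h y)

theorem unitaryTransvection_smul {v : V} (hv : B v v = 0) {a : E} (hav : B (a • v) (a • v) = 0)
    (c : E) : unitaryTransvection hav c = unitaryTransvection hv (c * (a * σ a)) := by
  ext x
  simp only [unitaryTransvection_apply, LinearMap.map_smulₛₗ, LinearMap.smul_apply, smul_eq_mul]
  module

theorem unitaryTransvectionsAlong_eq_image (hsymm : B.IsSymm) (hsep : B.SeparatingLeft) {v : V}
    (hv : B v v = 0) (hv0 : v ≠ 0) :
    unitaryTransvectionsAlong B v = unitaryTransvection hv '' traceZeroScalars σ := by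
  ext T
  constructor
  · rintro ⟨hT, hTv⟩
    obtain ⟨w, hw, hw0, c, hc, rfl⟩ := exists_eq_unitaryTransvection hsymm hsep hT
    obtain ⟨a, rfl⟩ := Submodule.mem_span_singleton.1
      ((forall_unitaryTransvection_sub_mem_span_iff hsep hw hw0 hc.1).1 hTv)
    rw [unitaryTransvection_smul hv] at hT ⊢
    exact Set.mem_image_of_mem _ ((unitaryTransvection_mem_iff hsymm hsep hv hv0).1 hT)
  · rintro ⟨c, hc, rfl⟩
    exact ⟨(unitaryTransvection_mem_iff hsymm hsep hv hv0).2 hc,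
      (forall_unitaryTransvection_sub_mem_span_iff hsep hv hv0 hc.1).2
        (Submodule.mem_span_singleton_self v)⟩

theorem exists_mem_unitaryTransvectionsAlong (hsymm : B.IsSymm) (hsep : B.SeparatingLeft)
    {T : V ≃ₗ[E] V} (hT : T ∈ unitaryTransvections B) :
    ∃ v ∈ isotropicVectors B, T ∈ unitaryTransvectionsAlong B v := by
  obtain ⟨v, hv, hv0, c, hc, rfl⟩ := exists_eq_unitaryTransvection hsymm hsep hT
  exact ⟨v, ⟨hv0, hv⟩, hT, (forall_unitaryTransvection_sub_mem_span_iff hsep hv hv0 hc.1).2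
    (Submodule.mem_span_singleton_self v)⟩

theorem inv_mem_unitaryTransvections {T : V ≃ₗ[E] V} (hT : T ∈ unitaryTransvections B) :
    T⁻¹ ∈ unitaryTransvections B := by
  obtain ⟨hT, hne, hB⟩ := hT
  refine ⟨LinearEquiv.inv_mem_transvections_iff.2 hT, inv_ne_one.2 hne, fun x y => ?_⟩
  simpa [← LinearEquiv.mul_apply] using (hB (T⁻¹ x) (T⁻¹ y)).symm

theorem inv_mem_unitaryTransvectionsAlong {v : V} {T : V ≃ₗ[E] V}
    (hT : T ∈ unitaryTransvectionsAlong B v) : T⁻¹ ∈ unitaryTransvectionsAlong B v := by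
  refine ⟨inv_mem_unitaryTransvections hT.1, fun x => ?_⟩
  simpa [← LinearEquiv.mul_apply] using neg_mem (hT.2 (T⁻¹ x))

theorem fixedCodim_unitaryTransvection (hsep : B.SeparatingLeft) {v : V} (hv : B v v = 0)
    (hv0 : v ≠ 0) {c : E} (hc : c ≠ 0) : fixedCodim (unitaryTransvection hv c) = 1 := by
  rw [fixedCodim, unitaryTransvection, fixedSubmodule_transvection _ hv0,
    finrank_quotient_ker_dual (smul_ne_zero hc (apply_ne_zero_of_separatingLeft hsep hv0))]

theorem fixedCodim_unitaryTransvection_mul (hsymm : B.IsSymm) (hsep : B.SeparatingLeft) {v w : V}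
    (hv : B v v = 0) (hw : B w w = 0) (hvw : LinearIndependent E ![v, w]) {c d : E} (hc : c ≠ 0)
    (hd : d ≠ 0) : fixedCodim (unitaryTransvection hv c * unitaryTransvection hw d) = 2 := by
  have hv0 : v ≠ 0 := hvw.ne_zero 0
  have hw0 : w ≠ 0 := hvw.ne_zero 1
  have hker : LinearMap.ker (B v) ≠ LinearMap.ker (B w) := fun h => by
    obtain ⟨a, ha⟩ := exists_eq_smul_of_ker_eq hsymm hsep hv0 h
    exact (LinearIndependent.pair_iff' hv0).1 hvw a ha.symm
  rw [fixedCodim, unitaryTransvection, unitaryTransvection, fixedSubmodule_transvection_mul _ _ hvw,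
    LinearMap.ker_smul _ _ hc, LinearMap.ker_smul _ _ hd]
  exact finrank_quotient_ker_inf_ker_dual (apply_ne_zero_of_separatingLeft hsep hv0)
    (apply_ne_zero_of_separatingLeft hsep hw0) hker

theorem fixedCodim_mul_of_mem_along (hsymm : B.IsSymm) (hsep : B.SeparatingLeft) {v : V}
    (hv : B v v = 0) (hv0 : v ≠ 0) {S T : V ≃ₗ[E] V} (hT : T ∈ unitaryTransvectionsAlong B v)
    (hS : S ∈ unitaryTransvectionsAlong B v) (hTS : T * S ≠ 1) : fixedCodim (T * S) = 1 := by
  rw [unitaryTransvectionsAlong_eq_image hsymm hsep hv hv0] at hT hS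
  obtain ⟨c, -, rfl⟩ := hT
  obtain ⟨d, -, rfl⟩ := hS
  rw [unitaryTransvection_mul] at hTS ⊢
  refine fixedCodim_unitaryTransvection hsep hv hv0 fun hcd => hTS ?_
  rw [hcd, unitaryTransvection_zero]

theorem fixedCodim_mul_of_notMem_along (hsymm : B.IsSymm) (hsep : B.SeparatingLeft) {v : V}
    (hv : B v v = 0) (hv0 : v ≠ 0) {S T : V ≃ₗ[E] V} (hT : T ∈ unitaryTransvectionsAlong B v)
    (hS : S ∈ unitaryTransvections B) (hSv : S ∉ unitaryTransvectionsAlong B v) :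
    fixedCodim (T * S) = 2 := by
  rw [unitaryTransvectionsAlong_eq_image hsymm hsep hv hv0] at hT
  obtain ⟨c, hc, rfl⟩ := hT
  obtain ⟨w, hw, hw0, d, hd, rfl⟩ := exists_eq_unitaryTransvection hsymm hsep hS
  refine fixedCodim_unitaryTransvection_mul hsymm hsep hv hw ?_ hc.1 hd.1
  rw [LinearIndependent.pair_iff' hv0]
  rintro a rfl
  exact hSv ⟨hS, (forall_unitaryTransvection_sub_mem_span_iff hsep hw hw0 hd.1).2
    (Submodule.mem_span_singleton.2 ⟨a, rfl⟩)⟩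

variable [Module.Finite E V]

theorem setOf_fixedCodim_mul_eq_zero {T : V ≃ₗ[E] V} (hT : T ∈ unitaryTransvections B) :
    {S ∈ unitaryTransvections B | fixedCodim (T * S) = 0} = {T⁻¹} := by
  ext S
  simp only [Set.mem_ofPred_eq, Set.mem_singleton_iff]
  rw [fixedCodim_eq_zero_iff, mul_eq_one_iff_eq_inv', and_iff_right_iff_imp]
  rintro rfl
  exact inv_mem_unitaryTransvections hT

theorem setOf_fixedCodim_mul_eq_one (hsymm : B.IsSymm) (hsep : B.SeparatingLeft) {v : V}
    (hv : v ∈ isotropicVectors B) {T : V ≃ₗ[E] V} (hT : T ∈ unitaryTransvectionsAlong B v) :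
    {S ∈ unitaryTransvections B | fixedCodim (T * S) = 1} =
      unitaryTransvectionsAlong B v \ {T⁻¹} := by
  ext S
  constructor
  · rintro ⟨hS, hTS⟩
    refine ⟨by_contra fun hSv => ?_, fun hST => ?_⟩
    · have := fixedCodim_mul_of_notMem_along hsymm hsep hv.2 hv.1 hT hS hSv
      omega
    · rw [mul_eq_one_iff_eq_inv'.2 hST, fixedCodim_eq_zero_iff.2 rfl] at hTS
      exact zero_ne_one hTS
  · rintro ⟨hSv, hST⟩
    exact ⟨hSv.1, fixedCodim_mul_of_mem_along hsymm hsep hv.2 hv.1 hT hSv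
      (mt mul_eq_one_iff_eq_inv'.1 hST)⟩

theorem setOf_fixedCodim_mul_eq_two (hsymm : B.IsSymm) (hsep : B.SeparatingLeft) {v : V}
    (hv : v ∈ isotropicVectors B) {T : V ≃ₗ[E] V} (hT : T ∈ unitaryTransvectionsAlong B v) :
    {S ∈ unitaryTransvections B | fixedCodim (T * S) = 2} =
      unitaryTransvections B \ unitaryTransvectionsAlong B v := by
  ext S
  constructor
  · rintro ⟨hS, hTS⟩
    refine ⟨hS, fun hSv => ?_⟩
    by_cases hone : T * S = 1
    · rw [fixedCodim_eq_zero_iff.2 hone] at hTS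
      omega
    · rw [fixedCodim_mul_of_mem_along hsymm hsep hv.2 hv.1 hT hSv hone] at hTS
      omega
  · rintro ⟨hS, hSv⟩
    exact ⟨hS, fixedCodim_mul_of_notMem_along hsymm hsep hv.2 hv.1 hT hS hSv⟩

end UnitaryTransvection

section Counting

variable {E V : Type*} [Field E] [Fintype E] [AddCommGroup V] [Module E V] {q : ℕ} {σ : E →+* E}
  {B : V →ₛₗ[σ] V →ₗ[E] E}

theorem ncard_unitaryTransvectionsAlong (hq : Fintype.card E = q ^ 2) (hσ : ∀ a, σ a = a ^ q)
    (hsymm : B.IsSymm) (hsep : B.SeparatingLeft) {v : V} (hv : v ∈ isotropicVectors B) :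
    (unitaryTransvectionsAlong B v).ncard = q - 1 := by
  rw [unitaryTransvectionsAlong_eq_image hsymm hsep hv.2 hv.1,
    Set.ncard_image_of_injective _ (unitaryTransvection_injective hsep hv.2 hv.1),
    ncard_traceZeroScalars hq hσ]

theorem ncard_setOf_mem_unitaryTransvectionsAlong (hq : Fintype.card E = q ^ 2) (hsymm : B.IsSymm)
    (hsep : B.SeparatingLeft) {T : V ≃ₗ[E] V} (hT : T ∈ unitaryTransvections B) :
    {w ∈ isotropicVectors B | T ∈ unitaryTransvectionsAlong B w}.ncard = q ^ 2 - 1 := by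
  obtain ⟨v, hv, hv0, c, hc, rfl⟩ := exists_eq_unitaryTransvection hsymm hsep hT
  have himage : {w ∈ isotropicVectors B |
      unitaryTransvection hv c ∈ unitaryTransvectionsAlong B w} = (· • v) '' ({0}ᶜ : Set E) := by
    ext w
    refine Iff.trans (and_congr_right fun _ => ?_)
      (mem_isotropicVectors_and_mem_span_iff (B := B) ⟨hv0, hv⟩)
    exact (and_iff_right hT).trans (forall_unitaryTransvection_sub_mem_span_iff hsep hv hv0 hc.1)
  rw [himage, Set.ncard_image_of_injective _ (smul_left_injective E hv0), Set.ncard_compl,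
    Set.ncard_singleton, Nat.card_eq_fintype_card, hq]

variable [Module.Finite E V]

theorem ncard_unitaryTransvections_mul (hq : Fintype.card E = q ^ 2) (hσ : ∀ a, σ a = a ^ q)
    (hsymm : B.IsSymm) (hsep : B.SeparatingLeft) :
    (unitaryTransvections B).ncard * (q + 1) = (isotropicVectors B).ncard := by
  have : Finite V := Module.finite_of_finite E
  have : Finite (V ≃ₗ[E] V) := DFunLike.finite _
  have hq2 := two_le_of_card_eq_sq hq
  have hdouble : (isotropicVectors B).ncard * (q - 1) =
      (unitaryTransvections B).ncard * (q ^ 2 - 1) := by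
    refine ncard_mul_eq_ncard_mul (fun v T => T ∈ unitaryTransvectionsAlong B v)
      (fun v hv => ?_) (fun T => ncard_setOf_mem_unitaryTransvectionsAlong hq hsymm hsep)
    rw [← ncard_unitaryTransvectionsAlong hq hσ hsymm hsep hv]
    congr 1 with T
    exact and_iff_right_of_imp And.left
  refine Nat.eq_of_mul_eq_mul_right (Nat.sub_pos_of_lt hq2) ?_
  rw [mul_assoc, hdouble, Nat.eq_sub_of_add_eq ((card_eq_succ_mul_pred_add_one hq).symm.trans hq)]

theorem ncard_unitaryTransvections (hq : Fintype.card E = q ^ 2) (hσ : ∀ a, σ a = a ^ q)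
    (hsymm : B.IsSymm) (hsep : B.SeparatingLeft) {n : ℕ} (hn : Module.finrank E V = n + 1) :
    ((unitaryTransvections B).ncard : ℝ) * (q + 1) =
      (q ^ (n + 1) - (-1) ^ (n + 1)) * (q ^ n - (-1) ^ n) := by
  rw [← ncard_isotropicVectors hq hσ hsymm hsep hn]
  exact_mod_cast ncard_unitaryTransvections_mul hq hσ hsymm hsep

theorem ncard_setOf_fixedCodim_mul_eq_one (hq : Fintype.card E = q ^ 2) (hσ : ∀ a, σ a = a ^ q)
    (hsymm : B.IsSymm) (hsep : B.SeparatingLeft) {T : V ≃ₗ[E] V}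
    (hT : T ∈ unitaryTransvections B) :
    {S ∈ unitaryTransvections B | fixedCodim (T * S) = 1}.ncard = q - 2 := by
  obtain ⟨v, hv, hTv⟩ := exists_mem_unitaryTransvectionsAlong hsymm hsep hT
  rw [setOf_fixedCodim_mul_eq_one hsymm hsep hv hTv,
    Set.ncard_sdiff_singleton_of_mem (inv_mem_unitaryTransvectionsAlong hTv),
    ncard_unitaryTransvectionsAlong hq hσ hsymm hsep hv, Nat.sub_sub]

theorem ncard_setOf_fixedCodim_mul_eq_two (hq : Fintype.card E = q ^ 2) (hσ : ∀ a, σ a = a ^ q)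
    (hsymm : B.IsSymm) (hsep : B.SeparatingLeft) {T : V ≃ₗ[E] V}
    (hT : T ∈ unitaryTransvections B) :
    {S ∈ unitaryTransvections B | fixedCodim (T * S) = 2}.ncard + (q - 1) =
      (unitaryTransvections B).ncard := by
  have : Finite V := Module.finite_of_finite E
  have : Finite (V ≃ₗ[E] V) := DFunLike.finite _
  obtain ⟨v, hv, hTv⟩ := exists_mem_unitaryTransvectionsAlong hsymm hsep hT
  rw [setOf_fixedCodim_mul_eq_two hsymm hsep hv hTv,
    ← ncard_unitaryTransvectionsAlong hq hσ hsymm hsep hv]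
  exact Set.ncard_sdiff_add_ncard_of_subset (Set.sep_subset _ _)

end Counting

section Probability

variable {E V : Type*} [Field E] [AddCommGroup V] [Module E V] {σ : E →+* E}
  {B : V →ₛₗ[σ] V →ₗ[E] E} {q n : ℕ}

/-- The probability that the product of two independent uniformly random unitary transvections has
fixed space of codimension `e`. -/
def fixedCodimProb (B : V →ₛₗ[σ] V →ₗ[E] E) (e : ℕ) : ℝ :=
  {p : (V ≃ₗ[E] V) × (V ≃ₗ[E] V) | p.1 ∈ unitaryTransvections B ∧
    p.2 ∈ unitaryTransvections B ∧ fixedCodim (p.1 * p.2) = e}.ncard /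
      ((unitaryTransvections B).ncard : ℝ) ^ 2

variable [Fintype E] [Module.Finite E V]

theorem pow_sub_neg_one_pow_pos (hq : 2 ≤ q) (hn : n ≠ 0) : 0 < (q : ℝ) ^ n - (-1) ^ n := by
  have hpow : (1 : ℝ) < q ^ n := one_lt_pow₀ (by exact_mod_cast hq) hn
  rcases neg_one_pow_eq_or ℝ n with h | h <;> rw [h] <;> linarith

theorem ncard_unitaryTransvections_pos (hq : Fintype.card E = q ^ 2) (hσ : ∀ a, σ a = a ^ q)
    (hsymm : B.IsSymm) (hsep : B.SeparatingLeft) (hn : 2 ≤ Module.finrank E V) :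
    0 < (unitaryTransvections B).ncard := by
  obtain ⟨n, hV⟩ := Nat.exists_eq_add_of_le' hn
  have hq2 := two_le_of_card_eq_sq hq
  have hN := mul_pos (pow_sub_neg_one_pow_pos hq2 (n + 1).succ_ne_zero)
    (pow_sub_neg_one_pow_pos hq2 n.succ_ne_zero)
  rw [← ncard_unitaryTransvections hq hσ hsymm hsep hV] at hN
  exact_mod_cast pos_of_mul_pos_left hN (by positivity)

theorem fixedCodimProb_eq_div (hq : Fintype.card E = q ^ 2) (hσ : ∀ a, σ a = a ^ q)
    (hsymm : B.IsSymm) (hsep : B.SeparatingLeft) (hn : 2 ≤ n) (hV : Module.finrank E V = n)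
    {e m : ℕ} (hm : ∀ T ∈ unitaryTransvections B,
      {S ∈ unitaryTransvections B | fixedCodim (T * S) = e}.ncard = m) :
    fixedCodimProb B e = m * (q + 1) /
      (((q : ℝ) ^ n - (-1) ^ n) * ((q : ℝ) ^ (n - 1) - (-1) ^ (n - 1))) := by
  have : Finite V := Module.finite_of_finite E
  have : Finite (V ≃ₗ[E] V) := DFunLike.finite _
  have hpos : (0 : ℝ) < (unitaryTransvections B).ncard := by
    exact_mod_cast ncard_unitaryTransvections_pos hq hσ hsymm hsep (hn.trans_eq hV.symm)
  have hpairs := ncard_setOf_mem_and_mem_fiber (unitaryTransvections B)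
    (fun T => {S ∈ unitaryTransvections B | fixedCodim (T * S) = e}) hm
  simp only [Set.mem_ofPred_eq] at hpairs
  obtain ⟨k, rfl⟩ := Nat.exists_eq_add_of_le' (one_le_two.trans hn)
  rw [fixedCodimProb, hpairs, Nat.add_sub_cancel,
    ← ncard_unitaryTransvections hq hσ hsymm hsep hV]
  push_cast
  field_simp

theorem gu_transvection_product_probabilities_general (hq : Fintype.card E = q ^ 2) (hn : 2 ≤ n)
    (hV : Module.finrank E V = n) (hσ : ∀ a, σ a = a ^ q) (hsymm : B.IsSymm)
    (hsep : B.SeparatingLeft) :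
    fixedCodimProb B 2 = ((q : ℝ) ^ (2 * n - 1) - (-1) ^ (n - 1) * (q : ℝ) ^ n -
        (-1) ^ n * (q : ℝ) ^ (n - 1) - (q : ℝ) ^ 2) /
      (((q : ℝ) ^ n - (-1) ^ n) * ((q : ℝ) ^ (n - 1) - (-1) ^ (n - 1))) ∧
    fixedCodimProb B 1 = ((q : ℝ) ^ 2 - q - 2) /
      (((q : ℝ) ^ n - (-1) ^ n) * ((q : ℝ) ^ (n - 1) - (-1) ^ (n - 1))) ∧
    fixedCodimProb B 0 = ((q : ℝ) + 1) /
      (((q : ℝ) ^ n - (-1) ^ n) * ((q : ℝ) ^ (n - 1) - (-1) ^ (n - 1))) := by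
  have hq2 := two_le_of_card_eq_sq hq
  have hprob {e m : ℕ} := fixedCodimProb_eq_div (e := e) (m := m) hq hσ hsymm hsep hn hV
  have htwo (T) (hT : T ∈ unitaryTransvections B) :=
    ncard_setOf_fixedCodim_mul_eq_two hq hσ hsymm hsep hT
  refine ⟨?_, ?_, ?_⟩
  · obtain ⟨T, hT⟩ := Set.nonempty_of_ncard_ne_zero
      (ncard_unitaryTransvections_pos hq hσ hsymm hsep (hn.trans_eq hV.symm)).ne'
    have hle := (Nat.le_add_left _ _).trans_eq (htwo T hT)
    rw [hprob fun T hT => Nat.eq_sub_of_add_eq (htwo T hT), Nat.cast_sub hle,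
      Nat.cast_sub (one_le_two.trans hq2), Nat.cast_one]
    obtain ⟨k, rfl⟩ := Nat.exists_eq_add_of_le' (one_le_two.trans hn)
    rw [Nat.add_sub_cancel, show 2 * (k + 1) - 1 = 2 * k + 1 by omega]
    congr 1
    linear_combination ncard_unitaryTransvections hq hσ hsymm hsep hV -
      sq_neg_one_pow_eq_one (R := ℝ) k
  · rw [hprob fun T => ncard_setOf_fixedCodim_mul_eq_one hq hσ hsymm hsep]
    push_cast [hq2]
    ring
  · rw [hprob fun T hT => by rw [setOf_fixedCodim_mul_eq_zero hT, Set.ncard_singleton],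
      Nat.cast_one, one_mul]

end Probability

section Matrix

variable {E : Type} [Field E] {n q : ℕ} {B : (Fin n → E) → (Fin n → E) → E} {σ : E →+* E}
  {H : (Fin n → E) →ₛₗ[σ] (Fin n → E) →ₗ[E] E}

/-- The identification of `GL_n(E)` with the linear automorphisms of `E^n`, an invertible matrix
acting on column vectors. -/
def mulVecEquiv : (Matrix (Fin n) (Fin n) E)ˣ ≃* ((Fin n → E) ≃ₗ[E] (Fin n → E)) :=
  Matrix.GeneralLinearGroup.toLin.trans (LinearMap.GeneralLinearGroup.generalLinearEquiv E _)

theorem mulVecEquiv_apply (g : (Matrix (Fin n) (Fin n) E)ˣ) (x : Fin n → E) :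
    mulVecEquiv g x = g.val.mulVec x :=
  rfl

theorem isGLTransvection_iff (g : (Matrix (Fin n) (Fin n) E)ˣ) :
    IsGLTransvection g.val ↔
      mulVecEquiv g ∈ LinearEquiv.transvections E (Fin n → E) ∧ mulVecEquiv g ≠ 1 := by
  constructor
  · rintro ⟨v, hv, w, hw, hwv, hg⟩
    have hg' : mulVecEquiv g = LinearEquiv.transvection hwv := LinearEquiv.ext hg
    refine ⟨hg' ▸ LinearEquiv.mem_transvections hwv, fun hone => hw (LinearMap.ext fun y => ?_)⟩
    have hy := hg y
    rw [← mulVecEquiv_apply, hone, LinearEquiv.coe_one, id, left_eq_add] at hy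
    exact (smul_eq_zero_iff_left hv).1 hy
  · rintro ⟨⟨w, v, hwv, hg⟩, hone⟩
    rw [hg] at hone
    refine ⟨v, ?_, w, ?_, hwv, LinearEquiv.congr_fun hg⟩
    · rintro rfl
      exact hone (LinearEquiv.transvection.of_right_eq_zero w hwv)
    · rintro rfl
      exact hone (LinearEquiv.transvection.of_left_eq_zero v hwv)

theorem mulVecEquiv_mem_unitaryTransvections_iff (hH : ∀ x y, H x y = B x y)
    (g : (Matrix (Fin n) (Fin n) E)ˣ) :
    mulVecEquiv g ∈ unitaryTransvections H ↔ g ∈ formIsometry B ∧ IsGLTransvection g.val := by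
  rw [isGLTransvection_iff, unitaryTransvections, Set.mem_ofPred_eq, ← and_assoc, and_comm]
  simp only [hH]
  rfl

theorem fixdim_add_fixedCodim (g : (Matrix (Fin n) (Fin n) E)ˣ) :
    fixdim g + fixedCodim (mulVecEquiv g) = n := by
  have hker : LinearMap.ker (Matrix.toLin' (g.val - 1)) =
      LinearMap.fixedSubmodule (mulVecEquiv g : (Fin n → E) →ₗ[E] (Fin n → E)) := by
    rw [LinearMap.fixedSubmodule_eq_ker, map_sub, Matrix.toLin'_one]
    rfl
  rw [fixdim, fixedCodim, hker, add_comm, Submodule.finrank_quotient_add_finrank,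
    Module.finrank_fin_fun]

theorem fixdim_mul_eq_sub_iff (g h : (Matrix (Fin n) (Fin n) E)ˣ) {e : ℕ} (he : e ≤ n) :
    fixdim (g * h) = n - e ↔ fixedCodim (mulVecEquiv g * mulVecEquiv h) = e := by
  have := fixdim_add_fixedCodim (g * h)
  rw [← map_mul]
  omega

theorem natCard_isGLTransvection (hH : ∀ x y, H x y = B x y) :
    Nat.card {T : formIsometry B // IsGLTransvection T.1.val} = (unitaryTransvections H).ncard := by
  rw [← Nat.card_coe_set_eq]
  refine Nat.card_congr ((Equiv.subtypeSubtypeEquivSubtypeInter _ fun g =>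
    IsGLTransvection g.val).trans (mulVecEquiv.toEquiv.subtypeEquiv fun g => ?_))
  exact (mulVecEquiv_mem_unitaryTransvections_iff hH g).symm

theorem natCard_isGLTransvection_fixdim_mul (hH : ∀ x y, H x y = B x y) {e : ℕ} (he : e ≤ n) :
    Nat.card {p : formIsometry B × formIsometry B // IsGLTransvection p.1.1.val ∧
        IsGLTransvection p.2.1.val ∧ fixdim (p.1 * p.2).1 = n - e} =
      {p : ((Fin n → E) ≃ₗ[E] (Fin n → E)) × ((Fin n → E) ≃ₗ[E] (Fin n → E)) |
        p.1 ∈ unitaryTransvections H ∧ p.2 ∈ unitaryTransvections H ∧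
          fixedCodim (p.1 * p.2) = e}.ncard := by
  have hmem := mulVecEquiv_mem_unitaryTransvections_iff hH
  have hinj : Function.Injective fun g : formIsometry B => mulVecEquiv g.1 :=
    mulVecEquiv.injective.comp Subtype.val_injective
  refine (Nat.card_coe_set_eq {p : formIsometry B × formIsometry B | _}).trans ?_
  rw [← Set.ncard_image_of_injective _ (hinj.prodMap hinj)]
  congr 1 with ⟨S, T⟩
  constructor
  · rintro ⟨⟨g, h⟩, ⟨hg, hh, hgh⟩, heq⟩
    obtain ⟨rfl, rfl⟩ := Prod.mk.inj heq
    exact ⟨(hmem g).2 ⟨g.2, hg⟩, (hmem h).2 ⟨h.2, hh⟩, (fixdim_mul_eq_sub_iff g.1 h.1 he).1 hgh⟩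
  · rintro ⟨hS, hT, hST⟩
    obtain ⟨g, rfl⟩ := mulVecEquiv.surjective S
    obtain ⟨h, rfl⟩ := mulVecEquiv.surjective T
    obtain ⟨hg, hgT⟩ := (hmem g).1 hS
    obtain ⟨hh, hhT⟩ := (hmem h).1 hT
    exact ⟨(⟨g, hg⟩, ⟨h, hh⟩), ⟨hgT, hhT, (fixdim_mul_eq_sub_iff g h he).2 hST⟩, rfl⟩

theorem fixedCodimProb_eq_natCard_div (hH : ∀ x y, H x y = B x y) {e : ℕ} (he : e ≤ n) :
    fixedCodimProb H e =
      (Nat.card {p : formIsometry B × formIsometry B // IsGLTransvection p.1.1.val ∧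
        IsGLTransvection p.2.1.val ∧ fixdim (p.1 * p.2).1 = n - e} : ℝ) /
      (Nat.card {T : formIsometry B // IsGLTransvection T.1.val} : ℝ) ^ 2 := by
  rw [fixedCodimProb, natCard_isGLTransvection_fixdim_mul hH he, natCard_isGLTransvection hH]

theorem exists_sesqForm_eq_of_hermitian [Fintype E] (hq : Fintype.card E = q ^ 2)
    (hadd₁ : ∀ x x' y, B (x + x') y = B x y + B x' y)
    (hsmul₁ : ∀ (a : E) (x y : Fin n → E), B (a • x) y = a ^ q * B x y)
    (hadd₂ : ∀ x y y', B x (y + y') = B x y + B x y')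
    (hsmul₂ : ∀ (a : E) (x y : Fin n → E), B x (a • y) = a * B x y)
    (hconj : ∀ x y, B y x = B x y ^ q) (hnd : ∀ x, (∀ y, B x y = 0) → x = 0) :
    ∃ σ : E →+* E, (∀ a, σ a = a ^ q) ∧ ∃ H : (Fin n → E) →ₛₗ[σ] (Fin n → E) →ₗ[E] E,
      (∀ x y, H x y = B x y) ∧ H.IsSymm ∧ H.SeparatingLeft := by
  obtain ⟨σ, hσ⟩ := exists_ringHom_eq_pow hq
  refine ⟨σ, hσ, LinearMap.mk₂'ₛₗ σ (RingHom.id E) B hadd₁ (fun a x y => ?_) hadd₂ hsmul₂,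
    fun _ _ => rfl, ⟨fun x y => ?_⟩, hnd⟩
  · rw [hsmul₁, hσ, smul_eq_mul]
  · rw [hσ]
    exact (hconj x y).symm

end Matrix

/-- **Theorem (product of two transvections in `GU_n(q)`).**  Let `V = F_{q²}^n`, `n ≥ 2`,
carry a nondegenerate Hermitian form `B` with isometry group `GU(V) ≅ GU_n(q)`, and set
`N = (q^n − (−1)^n)(q^{n−1} − (−1)^{n−1})`.  The probability that the product of two
independent uniformly random unitary transvections (transvections of `GL(V)` lying in
`GU(V)`) has fixed point subspace of codimension `e` equals
`(q^{2n−1} − (−1)^{n−1}q^n − (−1)^n q^{n−1} − q²)/N` if `e = 2`,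
`(q² − q − 2)/N` if `e = 1`, and `(q+1)/N` if `e = 0`. -/
theorem gu_transvection_product_probabilities {E : Type} [Field E] [Fintype E]
    {q n : ℕ} (hq : Fintype.card E = q ^ 2) (hn : 2 ≤ n)
    (B : (Fin n → E) → (Fin n → E) → E)
    (hadd₁ : ∀ x x' y, B (x + x') y = B x y + B x' y)
    (hsmul₁ : ∀ (a : E) (x y : Fin n → E), B (a • x) y = a ^ q * B x y)
    (hadd₂ : ∀ x y y', B x (y + y') = B x y + B x y')
    (hsmul₂ : ∀ (a : E) (x y : Fin n → E), B x (a • y) = a * B x y)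
    (hconj : ∀ x y, B y x = (B x y) ^ q)
    (hnd : ∀ x, (∀ y, B x y = 0) → x = 0) :
    ((Nat.card {p : ↥(formIsometry B) × ↥(formIsometry B) //
        IsGLTransvection ((p.1 : (Matrix (Fin n) (Fin n) E)ˣ) : Matrix (Fin n) (Fin n) E) ∧
        IsGLTransvection ((p.2 : (Matrix (Fin n) (Fin n) E)ˣ) : Matrix (Fin n) (Fin n) E) ∧
        fixdim ((p.1 * p.2 : ↥(formIsometry B)) : (Matrix (Fin n) (Fin n) E)ˣ) = n - 2} : ℝ) /
      (Nat.card {T : ↥(formIsometry B) //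
        IsGLTransvection ((T : (Matrix (Fin n) (Fin n) E)ˣ) : Matrix (Fin n) (Fin n) E)} : ℝ) ^ 2 =
      ((q : ℝ) ^ (2 * n - 1) - (-1 : ℝ) ^ (n - 1) * (q : ℝ) ^ n -
          (-1 : ℝ) ^ n * (q : ℝ) ^ (n - 1) - (q : ℝ) ^ 2) /
        (((q : ℝ) ^ n - (-1 : ℝ) ^ n) * ((q : ℝ) ^ (n - 1) - (-1 : ℝ) ^ (n - 1)))) ∧
    ((Nat.card {p : ↥(formIsometry B) × ↥(formIsometry B) //
        IsGLTransvection ((p.1 : (Matrix (Fin n) (Fin n) E)ˣ) : Matrix (Fin n) (Fin n) E) ∧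
        IsGLTransvection ((p.2 : (Matrix (Fin n) (Fin n) E)ˣ) : Matrix (Fin n) (Fin n) E) ∧
        fixdim ((p.1 * p.2 : ↥(formIsometry B)) : (Matrix (Fin n) (Fin n) E)ˣ) = n - 1} : ℝ) /
      (Nat.card {T : ↥(formIsometry B) //
        IsGLTransvection ((T : (Matrix (Fin n) (Fin n) E)ˣ) : Matrix (Fin n) (Fin n) E)} : ℝ) ^ 2 =
      ((q : ℝ) ^ 2 - (q : ℝ) - 2) /
        (((q : ℝ) ^ n - (-1 : ℝ) ^ n) * ((q : ℝ) ^ (n - 1) - (-1 : ℝ) ^ (n - 1)))) ∧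
    ((Nat.card {p : ↥(formIsometry B) × ↥(formIsometry B) //
        IsGLTransvection ((p.1 : (Matrix (Fin n) (Fin n) E)ˣ) : Matrix (Fin n) (Fin n) E) ∧
        IsGLTransvection ((p.2 : (Matrix (Fin n) (Fin n) E)ˣ) : Matrix (Fin n) (Fin n) E) ∧
        fixdim ((p.1 * p.2 : ↥(formIsometry B)) : (Matrix (Fin n) (Fin n) E)ˣ) = n - 0} : ℝ) /
      (Nat.card {T : ↥(formIsometry B) //
        IsGLTransvection ((T : (Matrix (Fin n) (Fin n) E)ˣ) : Matrix (Fin n) (Fin n) E)} : ℝ) ^ 2 =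
      ((q : ℝ) + 1) /
        (((q : ℝ) ^ n - (-1 : ℝ) ^ n) * ((q : ℝ) ^ (n - 1) - (-1 : ℝ) ^ (n - 1)))) := by
  obtain ⟨σ, hσ, H, hH, hsymm, hsep⟩ :=
    exists_sesqForm_eq_of_hermitian hq hadd₁ hsmul₁ hadd₂ hsmul₂ hconj hnd
  rw [← fixedCodimProb_eq_natCard_div hH hn,
    ← fixedCodimProb_eq_natCard_div hH (one_le_two.trans hn),
    ← fixedCodimProb_eq_natCard_div hH n.zero_le]
  exact gu_transvection_product_probabilities_general hq hn (Module.finrank_fin_fun E) hσ hsymm hsep
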